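/- Let n ≥ 1 and fix constants 0 < m ≤ M, C₁ ≥ 0, C ≥ 0, R₀ > 0. Let g assign to each x ∈ ℝⁿ a positive definite quadratic form g_x on ℝⁿ, continuously in x, such that m·|v|² ≤ g_x(v,v) ≤ M·|v|² for all x ∈ ℝⁿ and v ∈ ℝⁿ, and such that for |x| ≥ R₀ and all v ∈ ℝⁿ: (e^{−C₁} − C/|x|)·|v| ≤ √(g_x(v,v)) ≤ (e^{C₁} + C/|x|)·|v|. Define the length metric d_g(p,q) = inf{ ∫ √(g_{γ(t)}(γ′(t), γ′(t))) dt : γ a piecewise continuously differentiable curve from p to q in ℝⁿ }. Then there exist constants R₁ > 0 and C₂ > 0, depending only on n, m, M, C₁, C, R₀, such that for every x ∈ ℝⁿ with |x| ≥ R₁: e^{−C₂}·|x| − C₂ ≤ d_g(0, x) ≤ e^{C₂}·|x| + C₂. -/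

import Mathlib

/-- The set of lengths of piecewise continuously differentiable curves joining `p` to `q`,
measured in the (quadratic-form valued) Riemannian metric `Q`.  A curve is recorded together
with its derivative function `γ'`, which is allowed to be undefined (as a derivative) on a
finite exceptional set `T`. -/
noncomputable def lengthsSet (n : ℕ)
    (Q : EuclideanSpace ℝ (Fin n) → QuadraticForm ℝ (EuclideanSpace ℝ (Fin n)))
    (p q : EuclideanSpace ℝ (Fin n)) : Set ℝ :=
  {L | ∃ (a b : ℝ) (γ γ' : ℝ → EuclideanSpace ℝ (Fin n)) (T : Finset ℝ),
    a ≤ b ∧ ContinuousOn γ (Set.Icc a b) ∧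
    (∀ t ∈ Set.Icc a b \ (T : Set ℝ), HasDerivAt γ (γ' t) t) ∧
    ContinuousOn γ' (Set.Icc a b \ (T : Set ℝ)) ∧
    (∃ K : ℝ, ∀ t ∈ Set.Icc a b \ (T : Set ℝ), ‖γ' t‖ ≤ K) ∧
    γ a = p ∧ γ b = q ∧
    L = ∫ t in a..b, Real.sqrt (Q (γ t) (γ' t))}

/-!
If `c ‖v‖ ≤ F x v` for all `x` and `v`, integrating along a curve and applying the fundamental
theorem of calculus bounds its `F`-length below by `c` times the distance between its endpoints;
if `F x v ≤ c ‖v‖`, the straight segment attains at most `c` times that distance. With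
`F x v = √(Q x v)` and the global bounds `m ‖v‖² ≤ Q x v ≤ M ‖v‖²` this makes the Riemannian
distance bi-Lipschitz to the Euclidean one, with constants `√m` and `√M`.
-/

open MeasureTheory Set

theorem intervalIntegrable_of_continuousOn_diff_countable {E : Type*} [NormedAddCommGroup E]
    {f : ℝ → E} {a b K : ℝ} {T : Set ℝ} (hT : T.Countable)
    (hf : ContinuousOn f (uIcc a b \ T)) (hK : ∀ t ∈ uIcc a b \ T, ‖f t‖ ≤ K) :
    IntervalIntegrable f volume a b := by
  have hmeas : MeasurableSet (uIcc a b \ T) := measurableSet_uIcc.diff hT.measurableSet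
  have hfin : volume (uIcc a b \ T) < ⊤ :=
    (measure_mono sdiff_subset).trans_lt isCompact_uIcc.measure_lt_top
  have hint : IntegrableOn f (uIcc a b \ T) :=
    .of_bound hfin (hf.aestronglyMeasurable hmeas) K (ae_restrict_of_forall_mem hmeas hK)
  rw [intervalIntegrable_iff']
  exact hint.congr_set_ae (sdiff_null_ae_eq_self (hT.measure_zero _)).symm

section Curves

variable {E : Type*} [NormedAddCommGroup E] [NormedSpace ℝ E]

/-- `γ` is a piecewise continuously differentiable curve on `[a, b]` with velocity `γ'`. The
breakpoints form the finite set `T`, at which the values of `γ'` carry no information; boundedness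
of `γ'` off `T` stands in for the existence of its one-sided limits. -/
structure IsPiecewiseC1On (γ γ' : ℝ → E) (T : Finset ℝ) (a b : ℝ) : Prop where
  le : a ≤ b
  continuousOn : ContinuousOn γ (Icc a b)
  hasDerivAt : ∀ t ∈ Icc a b \ (T : Set ℝ), HasDerivAt γ (γ' t) t
  continuousOn_deriv : ContinuousOn γ' (Icc a b \ (T : Set ℝ))
  bounded_deriv : ∃ K : ℝ, ∀ t ∈ Icc a b \ (T : Set ℝ), ‖γ' t‖ ≤ K

namespace IsPiecewiseC1On

variable {γ γ' : ℝ → E} {T : Finset ℝ} {a b : ℝ}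

theorem intervalIntegrable_deriv (h : IsPiecewiseC1On γ γ' T a b) :
    IntervalIntegrable γ' volume a b := by
  obtain ⟨K, hK⟩ := h.bounded_deriv
  rw [← uIcc_of_le h.le] at hK
  exact intervalIntegrable_of_continuousOn_diff_countable T.countable_toSet
    (uIcc_of_le h.le ▸ h.continuousOn_deriv) hK

theorem integral_deriv [CompleteSpace E] (h : IsPiecewiseC1On γ γ' T a b) :
    ∫ t in a..b, γ' t = γ b - γ a := by
  refine integral_eq_of_hasDerivAt_off_countable γ γ' T.countable_toSet
    (uIcc_of_le h.le ▸ h.continuousOn) (fun t ht => ?_) h.intervalIntegrable_deriv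
  rw [min_eq_left h.le, max_eq_right h.le] at ht
  exact h.hasDerivAt t ⟨Ioo_subset_Icc_self ht.1, ht.2⟩

theorem intervalIntegrable_comp [ProperSpace E] {G : Type*} [NormedAddCommGroup G]
    {F : E → E → G} (h : IsPiecewiseC1On γ γ' T a b) (hF : Continuous (Function.uncurry F)) :
    IntervalIntegrable (fun t => F (γ t) (γ' t)) volume a b := by
  obtain ⟨K, hK⟩ := h.bounded_deriv
  have hcompact : IsCompact ((γ '' Icc a b) ×ˢ Metric.closedBall (0 : E) K) :=
    (isCompact_Icc.image_of_continuousOn h.continuousOn).prod (isCompact_closedBall 0 K)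
  obtain ⟨B, hB⟩ := hcompact.exists_bound_of_continuousOn hF.continuousOn
  refine intervalIntegrable_of_continuousOn_diff_countable (K := B) T.countable_toSet ?_ ?_ <;>
    rw [uIcc_of_le h.le]
  · exact hF.comp_continuousOn ((h.continuousOn.mono sdiff_subset).prodMk h.continuousOn_deriv)
  · exact fun t ht =>
      hB (γ t, γ' t) ⟨mem_image_of_mem γ ht.1, mem_closedBall_zero_iff.2 (hK t ht)⟩

theorem mul_norm_sub_le_integral [ProperSpace E] {F : E → E → ℝ} {c : ℝ}
    (h : IsPiecewiseC1On γ γ' T a b) (hF : Continuous (Function.uncurry F)) (hc : 0 ≤ c)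
    (hle : ∀ x v, c * ‖v‖ ≤ F x v) :
    c * ‖γ b - γ a‖ ≤ ∫ t in a..b, F (γ t) (γ' t) :=
  calc c * ‖γ b - γ a‖ ≤ c * ∫ t in a..b, ‖γ' t‖ := by
        rw [← h.integral_deriv]
        gcongr
        exact intervalIntegral.norm_integral_le_integral_norm h.le
    _ = ∫ t in a..b, c * ‖γ' t‖ := (intervalIntegral.integral_const_mul _ _).symm
    _ ≤ ∫ t in a..b, F (γ t) (γ' t) :=
        intervalIntegral.integral_mono_on h.le (h.intervalIntegrable_deriv.norm.const_mul c)
          (h.intervalIntegrable_comp hF) fun _ _ => hle _ _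

protected theorem lineMap (p q : E) :
    IsPiecewiseC1On (AffineMap.lineMap (k := ℝ) p q) (fun _ => q - p) ∅ 0 1 where
  le := zero_le_one
  continuousOn := AffineMap.lineMap_continuous.continuousOn
  hasDerivAt _ _ := AffineMap.hasDerivAt_lineMap
  continuousOn_deriv := continuousOn_const
  bounded_deriv := ⟨‖q - p‖, fun _ _ => le_rfl⟩

end IsPiecewiseC1On

theorem integral_lineMap_le_mul_norm_sub {F : E → E → ℝ} {c : ℝ}
    (hF : Continuous (Function.uncurry F)) (hle : ∀ x v, F x v ≤ c * ‖v‖) (p q : E) :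
    ∫ t in (0 : ℝ)..1, F (AffineMap.lineMap p q t) (q - p) ≤ c * ‖q - p‖ := by
  have hcont : Continuous fun t : ℝ => F (AffineMap.lineMap p q t) (q - p) :=
    hF.comp (AffineMap.lineMap_continuous.prodMk continuous_const)
  calc ∫ t in (0 : ℝ)..1, F (AffineMap.lineMap p q t) (q - p)
      ≤ ∫ _ in (0 : ℝ)..1, c * ‖q - p‖ :=
        intervalIntegral.integral_mono_on zero_le_one (hcont.intervalIntegrable 0 1)
          intervalIntegrable_const fun _ _ => hle _ _
    _ = c * ‖q - p‖ := by simp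

end Curves

theorem sqrt_mul_norm_sq {E : Type*} [SeminormedAddCommGroup E] (c : ℝ) (v : E) :
    √(c * ‖v‖ ^ 2) = √c * ‖v‖ := by
  rw [Real.sqrt_mul' c (sq_nonneg _), Real.sqrt_sq (norm_nonneg v)]

section LengthsSet

variable {n : ℕ} {Q : EuclideanSpace ℝ (Fin n) → QuadraticForm ℝ (EuclideanSpace ℝ (Fin n))}

theorem integral_sqrt_lineMap_mem_lengthsSet (p q : EuclideanSpace ℝ (Fin n)) :
    ∫ t in (0 : ℝ)..1, √(Q (AffineMap.lineMap p q t) (q - p)) ∈ lengthsSet n Q p q :=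
  have h := IsPiecewiseC1On.lineMap p q
  ⟨0, 1, _, _, ∅, h.le, h.continuousOn, h.hasDerivAt, h.continuousOn_deriv, h.bounded_deriv,
    AffineMap.lineMap_apply_zero p q, AffineMap.lineMap_apply_one p q, rfl⟩

theorem sqrt_mul_norm_sub_le_of_mem_lengthsSet {m : ℝ}
    (hQ : Continuous fun z : EuclideanSpace ℝ (Fin n) × EuclideanSpace ℝ (Fin n) => Q z.1 z.2)
    (hm : ∀ x v, m * ‖v‖ ^ 2 ≤ Q x v) {p q : EuclideanSpace ℝ (Fin n)} {L : ℝ}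
    (hL : L ∈ lengthsSet n Q p q) : √m * ‖q - p‖ ≤ L := by
  obtain ⟨a, b, γ, γ', T, hab, hγ, hderiv, hγ', hbdd, rfl, rfl, rfl⟩ := hL
  have hcurve : IsPiecewiseC1On γ γ' T a b := ⟨hab, hγ, hderiv, hγ', hbdd⟩
  exact hcurve.mul_norm_sub_le_integral (F := fun x v => √(Q x v)) hQ.sqrt (Real.sqrt_nonneg m)
    fun x v => sqrt_mul_norm_sq m v ▸ Real.sqrt_le_sqrt (hm x v)

theorem sqrt_mul_norm_sub_le_sInf_lengthsSet {m : ℝ}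
    (hQ : Continuous fun z : EuclideanSpace ℝ (Fin n) × EuclideanSpace ℝ (Fin n) => Q z.1 z.2)
    (hm : ∀ x v, m * ‖v‖ ^ 2 ≤ Q x v) (p q : EuclideanSpace ℝ (Fin n)) :
    √m * ‖q - p‖ ≤ sInf (lengthsSet n Q p q) :=
  le_csInf ⟨_, integral_sqrt_lineMap_mem_lengthsSet p q⟩
    fun _ => sqrt_mul_norm_sub_le_of_mem_lengthsSet hQ hm

theorem bddBelow_lengthsSet (p q : EuclideanSpace ℝ (Fin n)) :
    BddBelow (lengthsSet n Q p q) := by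
  refine ⟨0, ?_⟩
  rintro _ ⟨a, b, γ, γ', -, hab, -, -, -, -, -, -, rfl⟩
  exact intervalIntegral.integral_nonneg hab fun _ _ => Real.sqrt_nonneg _

theorem sInf_lengthsSet_le_sqrt_mul_norm_sub {M : ℝ}
    (hQ : Continuous fun z : EuclideanSpace ℝ (Fin n) × EuclideanSpace ℝ (Fin n) => Q z.1 z.2)
    (hM : ∀ x v, Q x v ≤ M * ‖v‖ ^ 2) (p q : EuclideanSpace ℝ (Fin n)) :
    sInf (lengthsSet n Q p q) ≤ √M * ‖q - p‖ :=
  calc sInf (lengthsSet n Q p q)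
      ≤ ∫ t in (0 : ℝ)..1, √(Q (AffineMap.lineMap p q t) (q - p)) :=
        csInf_le (bddBelow_lengthsSet p q) (integral_sqrt_lineMap_mem_lengthsSet p q)
    _ ≤ √M * ‖q - p‖ :=
        integral_lineMap_le_mul_norm_sub (F := fun x v => √(Q x v)) hQ.sqrt
          (fun x v => sqrt_mul_norm_sq M v ▸ Real.sqrt_le_sqrt (hM x v)) p q

end LengthsSet

theorem exists_pos_exp_neg_le_and_le_exp {a : ℝ} (ha : 0 < a) (b : ℝ) :
    ∃ C : ℝ, 0 < C ∧ Real.exp (-C) ≤ a ∧ b ≤ Real.exp C :=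
  ((Filter.eventually_gt_atTop 0).and
    ((Real.tendsto_exp_neg_atTop_nhds_zero.eventually_le_const ha).and
      (Real.tendsto_exp_atTop.eventually_ge_atTop b))).exists

theorem stmt_9_general {m : ℝ} (hm : 0 < m) (M : ℝ) :
    ∃ C₂ : ℝ, 0 < C₂ ∧
      ∀ (n : ℕ) (Q : EuclideanSpace ℝ (Fin n) → QuadraticForm ℝ (EuclideanSpace ℝ (Fin n))),
        Continuous (fun z : EuclideanSpace ℝ (Fin n) × EuclideanSpace ℝ (Fin n) => Q z.1 z.2) →
        (∀ x v, m * ‖v‖ ^ 2 ≤ Q x v ∧ Q x v ≤ M * ‖v‖ ^ 2) →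
        ∀ p q : EuclideanSpace ℝ (Fin n),
          Real.exp (-C₂) * ‖q - p‖ ≤ sInf (lengthsSet n Q p q) ∧
          sInf (lengthsSet n Q p q) ≤ Real.exp C₂ * ‖q - p‖ := by
  obtain ⟨C₂, hC₂, hexp_le, hle_exp⟩ :=
    exists_pos_exp_neg_le_and_le_exp (Real.sqrt_pos.2 hm) √M
  refine ⟨C₂, hC₂, fun n Q hQ hbounds p q => ⟨?_, ?_⟩⟩
  · calc Real.exp (-C₂) * ‖q - p‖ ≤ √m * ‖q - p‖ := by gcongr
      _ ≤ sInf (lengthsSet n Q p q) :=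
        sqrt_mul_norm_sub_le_sInf_lengthsSet hQ (fun x v => (hbounds x v).1) p q
  · calc sInf (lengthsSet n Q p q) ≤ √M * ‖q - p‖ :=
        sInf_lengthsSet_le_sqrt_mul_norm_sub hQ (fun x v => (hbounds x v).2) p q
      _ ≤ Real.exp C₂ * ‖q - p‖ := by gcongr

theorem stmt_9 (n : ℕ) (hn : 1 ≤ n) (m M C₁ C R₀ : ℝ)
    (hm : 0 < m) (hmM : m ≤ M) (hC₁ : 0 ≤ C₁) (hC : 0 ≤ C) (hR₀ : 0 < R₀) :
    ∃ R₁ : ℝ, 0 < R₁ ∧ ∃ C₂ : ℝ, 0 < C₂ ∧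
      ∀ Q : EuclideanSpace ℝ (Fin n) → QuadraticForm ℝ (EuclideanSpace ℝ (Fin n)),
        Continuous (fun pr : EuclideanSpace ℝ (Fin n) × EuclideanSpace ℝ (Fin n) =>
          Q pr.1 pr.2) →
        (∀ (x v : EuclideanSpace ℝ (Fin n)),
          m * ‖v‖^2 ≤ Q x v ∧ Q x v ≤ M * ‖v‖^2) →
        (∀ x : EuclideanSpace ℝ (Fin n), R₀ ≤ ‖x‖ → ∀ v,
          (Real.exp (-C₁) - C/‖x‖) * ‖v‖ ≤ Real.sqrt (Q x v) ∧
          Real.sqrt (Q x v) ≤ (Real.exp C₁ + C/‖x‖) * ‖v‖) →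
        ∀ x : EuclideanSpace ℝ (Fin n), R₁ ≤ ‖x‖ →
          Real.exp (-C₂) * ‖x‖ - C₂ ≤ sInf (lengthsSet n Q 0 x) ∧
          sInf (lengthsSet n Q 0 x) ≤ Real.exp C₂ * ‖x‖ + C₂ := by
  obtain ⟨C₂, hC₂, hdist⟩ := stmt_9_general hm M
  refine ⟨1, one_pos, C₂, hC₂, fun Q hQ hbounds _ x _ => ?_⟩
  obtain ⟨hlower, hupper⟩ := sub_zero x ▸ hdist n Q hQ hbounds 0 x
  constructor <;> linarith
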